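/- For every integer m ≥ 2 there exists an Eulerian orthogonal array with parameters OA(16^m, (4^m−1)/3, 4, 2): an array M with n = (4^m−1)/3 rows and columns indexed by j ∈ Z_N with N = 16^m, entries in F_4, such that for every pair of distinct rows k ≠ l and every quadruple (a_1, a_2, s_1, s_2) ∈ F_4^4, exactly 16^{m−2} indices j ∈ Z_N satisfy (M_{kj}, M_{lj}) = (a_1, a_2) and (M_{k,j+1} − M_{kj}, M_{l,j+1} − M_{lj}) = (s_1, s_2). -/

import Mathlib

/-!
The points of the projective space `ℙ(K ^ m)`, `K = F_4`, number `n = (4 ^ m - 1) / 3`; choosing a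
representative of each gives vectors `h_1, …, h_n` in `V = K ^ m` (the columns of a parity check
matrix of the Hamming code), any two of which are linearly independent.

There is also a cyclic word `c` of length `|V| ^ 2 = 16 ^ m` over the alphabet `V` in which every
ordered pair of letters occurs exactly once as a pair of consecutive letters
(an Eulerian circuit of the complete digraph with loops on `V`, i.e. a de Bruijn word of order 2);
this is `exists_cyclic_word`.

Put `M k j = h_k ⬝ᵥ c j`. For `k ≠ l` the map `A : x ↦ (h_k ⬝ᵥ x, h_l ⬝ᵥ x)` from `V` to `K ^ 2` is
surjective, so each of its fibres has `4 ^ (m - 2)` elements (`card_fiber`). Prescribing values and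
transitions in rows `k`, `l` at column `j` amounts to prescribing `A (c j)` and `A (c (j + 1))`.
As `(c j, c (j + 1))` runs through `V × V` bijectively, exactly
`4 ^ (m - 2) * 4 ^ (m - 2) = 16 ^ (m - 2)` columns satisfy this.
-/

open Matrix LinearAlgebra.Projectivization

/-- An infinite word over `ℕ` whose first `q ^ 2` letters, read cyclically, form a de Bruijn word of
order 2 over `{0, …, q - 1}`, for every `q`. The `i`-th block occupies the positions
`i ^ 2, …, i ^ 2 + 2 * i` and reads `0, i, 1, i, …, i - 1, i, i`. -/
def pairWord (j : ℕ) : ℕ :=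
  if (j - j.sqrt * j.sqrt) % 2 = 0 then (j - j.sqrt * j.sqrt) / 2 else j.sqrt

lemma pairWord_even {i t : ℕ} (h : t ≤ i) : pairWord (i * i + 2 * t) = t := by
  have hs : (i * i + 2 * t).sqrt = i := Nat.sqrt_add_eq i (by omega)
  simp [pairWord, hs]

lemma pairWord_odd {i t : ℕ} (h : t < i) : pairWord (i * i + (2 * t + 1)) = i := by
  have hs : (i * i + (2 * t + 1)).sqrt = i := Nat.sqrt_add_eq i (by omega)
  simp [pairWord, hs]

lemma pairWord_sq (i : ℕ) : pairWord (i * i) = 0 := by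
  simpa using pairWord_even (Nat.zero_le i)

lemma pairWord_le_sqrt (j : ℕ) : pairWord j ≤ j.sqrt := by
  have := Nat.sqrt_le_add j
  unfold pairWord
  split_ifs <;> omega

/-- Every ordered pair of letters less than `q` occurs in `pairWord` among the positions
`0, …, q ^ 2`. -/
lemma exists_pairWord {q a b : ℕ} (ha : a < q) (hb : b < q) :
    ∃ j < q * q, pairWord j = a ∧ pairWord (j + 1) = b := by
  -- The block of the larger of the two letters lies within the first `q ^ 2` positions.
  have key : ∀ i < q, ∀ r ≤ 2 * i, i * i + r < q * q := fun i hi r hr => by nlinarith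
  rcases lt_or_ge a b with hab | hab
  · exact ⟨b * b + 2 * a, key b hb _ (by omega), pairWord_even hab.le, pairWord_odd hab⟩
  · rcases Nat.eq_zero_or_pos b with rfl | hb0
    · refine ⟨a * a + 2 * a, key a ha _ le_rfl, pairWord_even le_rfl, ?_⟩
      rw [show a * a + 2 * a + 1 = (a + 1) * (a + 1) by ring, pairWord_sq]
    · obtain ⟨t, rfl⟩ : ∃ t, b = t + 1 := ⟨b - 1, by omega⟩
      refine ⟨a * a + (2 * t + 1), key a ha _ (by omega), pairWord_odd hab, ?_⟩
      rw [show a * a + (2 * t + 1) + 1 = a * a + 2 * (t + 1) by ring, pairWord_even hab]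

/-- A de Bruijn word of order 2 exists over every nonempty finite alphabet. -/
lemma exists_cyclic_word {V : Type*} [Finite V] [Nonempty V] {N : ℕ}
    (hN : N = Nat.card V * Nat.card V) :
    ∃ c : ZMod N → V, Function.Bijective fun j => (c j, c (j + 1)) := by
  obtain ⟨q, hq⟩ : ∃ q, q = Nat.card V := ⟨_, rfl⟩
  have hq0 : 0 < q := hq ▸ Nat.card_pos
  rw [← hq] at hN
  have hN0 : 0 < N := hN ▸ Nat.mul_pos hq0 hq0
  have : NeZero N := ⟨hN0.ne'⟩
  let e : Fin q ≃ V := (finCongr hq).trans (Finite.equivFin V).symm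
  have hlt (j : ZMod N) : pairWord j.val < q :=
    (pairWord_le_sqrt _).trans_lt (Nat.sqrt_lt.2 (hN ▸ j.val_lt))
  -- The letters at positions `q ^ 2` and `0` agree, so reading modulo `q ^ 2` is harmless there.
  have hval (j : ℕ) (hj : j ≤ N) : pairWord (j : ZMod N).val = pairWord j := by
    rw [ZMod.val_natCast]
    rcases hj.lt_or_eq with h | rfl
    · rw [Nat.mod_eq_of_lt h]
    · rw [Nat.mod_self, hN, pairWord_sq]
      exact pairWord_sq 0
  refine ⟨fun j => e ⟨pairWord j.val, hlt j⟩, ?_⟩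
  refine (Nat.bijective_iff_surjective_and_card _).2 ⟨?_, ?_⟩
  · rintro ⟨x, y⟩
    obtain ⟨j, hj, h1, h2⟩ := exists_pairWord (e.symm x).2 (e.symm y).2
    refine ⟨(j : ZMod N), ?_⟩
    have h1' := (hval j (by omega)).trans h1
    have h2' := (hval (j + 1) (by omega)).trans h2
    rw [Nat.cast_succ] at h2'
    simp only [h1', h2', Fin.eta, Equiv.apply_symm_apply]
  · rw [Nat.card_zmod, Nat.card_prod, ← hq, hN]

/-- Each fibre of the linear map given by two independent rows has codimension 2. -/
lemma card_fiber {K : Type*} [Field K] [Finite K] {m : ℕ} {A : Matrix (Fin 2) (Fin m) K}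
    (hA : LinearIndependent K A.row) (b : Fin 2 → K) :
    Nat.card {x : Fin m → K // A *ᵥ x = b} = Nat.card K ^ (m - 2) := by
  have hr : Module.finrank K (LinearMap.range A.mulVecLin) = 2 := by
    simpa [Matrix.rank] using hA.rank_matrix
  have hs : Function.Surjective A.mulVecLin :=
    LinearMap.range_eq_top.1 (Submodule.eq_top_of_finrank_eq (by simpa using hr))
  have hk := A.mulVecLin.finrank_range_add_finrank_ker
  rw [hr, Module.finrank_fin_fun] at hk
  rw [show m - 2 = Module.finrank K (LinearMap.ker A.mulVecLin) by omega,
    ← Module.natCard_eq_pow_finrank (K := K)]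
  exact Nat.card_congr (A.mulVecLin.toAddMonoidHom.fiberEquivKerOfSurjective hs b)

/-- For every `m ≥ 2` there is an Eulerian orthogonal array with parameters
`OA(16^m, (4^m−1)/3, 4, 2)` over `F_4`: every pair of values together with every
pair of cyclic transitions on any two distinct rows occurs exactly `16^(m−2)`
times among the cyclically indexed columns. -/
theorem exists_eulerian_oa_from_hamming_code (m : ℕ) (hm : 2 ≤ m) :
    ∃ M : Fin ((4 ^ m - 1) / 3) → ZMod (16 ^ m) → GaloisField 2 2,
      ∀ k l : Fin ((4 ^ m - 1) / 3), k ≠ l →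
        ∀ a₁ a₂ s₁ s₂ : GaloisField 2 2,
          Nat.card {j : ZMod (16 ^ m) //
              M k j = a₁ ∧ M l j = a₂ ∧
              M k (j + 1) - M k j = s₁ ∧ M l (j + 1) - M l j = s₂} =
            16 ^ (m - 2) := by
  have hK : Nat.card (GaloisField 2 2) = 4 := GaloisField.card 2 2 (by norm_num)
  set K := GaloisField 2 2
  have hV : Nat.card (Fin m → K) = 4 ^ m := by
    rw [Nat.card_fun, hK, Nat.card_fin]
  have hN : 16 ^ m = Nat.card (Fin m → K) * Nat.card (Fin m → K) := by
    rw [hV, ← mul_pow]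
    norm_num
  have : Finite K := Nat.finite_of_card_ne_zero (by omega)
  obtain ⟨c, hc⟩ := exists_cyclic_word hN
  have hP : Nat.card (ℙ K (Fin m → K)) = (4 ^ m - 1) / 3 := by
    rw [Projectivization.card'', hV, hK]
  let p : Fin ((4 ^ m - 1) / 3) ≃ ℙ K (Fin m → K) :=
    (finCongr hP.symm).trans (Finite.equivFin _).symm
  refine ⟨fun k j => (p k).rep ⬝ᵥ c j, fun k l hkl a₁ a₂ s₁ s₂ => ?_⟩
  let A : Matrix (Fin 2) (Fin m) K := Matrix.of (Projectivization.rep ∘ ![p k, p l])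
  have hA : LinearIndependent K A.row :=
    Projectivization.independent_iff.1
      ((Projectivization.independent_pair_iff_ne _ _).2 (p.injective.ne hkl))
  have hmem (x : Fin m → K) (b₁ b₂ : K) :
      A *ᵥ x = ![b₁, b₂] ↔ (p k).rep ⬝ᵥ x = b₁ ∧ (p l).rep ⬝ᵥ x = b₂ := by
    rw [funext_iff, Fin.forall_fin_two]
    rfl
  have hequiv : {j : ZMod (16 ^ m) //
      (p k).rep ⬝ᵥ c j = a₁ ∧ (p l).rep ⬝ᵥ c j = a₂ ∧
      (p k).rep ⬝ᵥ c (j + 1) - (p k).rep ⬝ᵥ c j = s₁ ∧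
      (p l).rep ⬝ᵥ c (j + 1) - (p l).rep ⬝ᵥ c j = s₂} ≃
      {x // A *ᵥ x = ![a₁, a₂]} × {y // A *ᵥ y = ![s₁ + a₁, s₂ + a₂]} := by
    refine ((Equiv.ofBijective _ hc).subtypeEquiv fun j => ?_).trans
      (Equiv.subtypeProdEquivProd (p := fun x => A *ᵥ x = ![a₁, a₂])
        (q := fun y => A *ᵥ y = ![s₁ + a₁, s₂ + a₂]))
    simp only [Equiv.ofBijective_apply, hmem, sub_eq_iff_eq_add]
    constructor
    · rintro ⟨h1, h2, h3, h4⟩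
      rw [h1] at h3
      rw [h2] at h4
      exact ⟨⟨h1, h2⟩, h3, h4⟩
    · rintro ⟨⟨h1, h2⟩, h3, h4⟩
      rw [h1, h2]
      exact ⟨rfl, rfl, h3, h4⟩
  rw [Nat.card_congr hequiv, Nat.card_prod, card_fiber hA, card_fiber hA, hK, ← mul_pow]
  norm_num
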